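/- Let λ > 0 and q₋ < x₀ < 0. As ε → 0⁺, the conditional law Law[τ_ε − (1/λ)·ln(1/ε) | C_ε] converges weakly to the law of (1/(2λ))·ln(x₀²·λ) + (1/(2λ))·Z, where Z is a standard Gumbel random variable. -/

import Mathlib

open MeasureTheory ProbabilityTheory Filter Topology Set

/-- `B` is a standard Brownian motion (for times `t ≥ 0`) on the probability space `(Ω, P)`. -/
def IsBrownianMotion {Ω : Type*} [MeasurableSpace Ω] (P : Measure Ω) (B : ℝ → Ω → ℝ) : Prop :=
  (∀ t : ℝ, Measurable (B t)) ∧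
  (∀ᵐ ω ∂P, B 0 ω = 0 ∧ ContinuousOn (fun t => B t ω) (Set.Ici (0 : ℝ))) ∧
  (∀ s t : ℝ, 0 ≤ s → s ≤ t →
    Measure.map (fun ω => B t ω - B s ω) P = gaussianReal 0 (Real.toNNReal (t - s))) ∧
  (∀ t : ℕ → ℝ, Monotone t → (∀ i, 0 ≤ t i) →
    iIndepFun (fun i ω => B (t (i + 1)) ω - B (t i) ω) P)

/-!
Put `v(t) = (1 - e^{-2λt}) / (2λ)` and `T = 1 / (2λ)`. The path `X_ε` reaches `0` at time `t` when
`B(v(t)) = -x₀/ε`, and `q₋` when `B(v(t)) = -x₀/ε - a √(T - v(t))` with `a = -q₋ √(2λ) / ε`. After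
meeting this curve at time `r`, reaching the level `-x₀/ε` before time `T` asks for an increase of
`a` standard deviations of the remaining increment `B(T) - B(r)`, an event of probability at most
`2 Φ̄(a)`, where `Φ̄` is the Gaussian tail. By the reflection principle, exit at `0` before time `t`
therefore has probability `2 Φ̄(-x₀ / (ε √v(t)))` up to an error `2 Φ̄(a)`, which is negligible
because `q₋ < x₀`. Taking `t = (1/λ) ln(1/ε) + c` and dividing by the value at `t = ∞`, Mills'
asymptotics of `Φ̄` give the limit `exp(-x₀² λ e^{-2λc})`, which is the distribution function of
`(1/(2λ)) ln(x₀² λ) + (1/(2λ)) Z` at `c`.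
-/

section GaussianTail

/-- The upper tail `P(N > y)` of a standard normal random variable `N`. -/
noncomputable def gaussianTail (y : ℝ) : ℝ := (gaussianReal 0 1).real (Ioi y)

lemma gaussianTail_nonneg (y : ℝ) : 0 ≤ gaussianTail y := measureReal_nonneg

lemma gaussianTail_eq_one_sub_cdf (y : ℝ) : gaussianTail y = 1 - cdf (gaussianReal 0 1) y := by
  rw [cdf_eq_real, gaussianTail, ← compl_Iic, probReal_compl_eq_one_sub measurableSet_Iic]

lemma gaussianTail_eq_integral (y : ℝ) :
    gaussianTail y = ∫ x in Ioi y, gaussianPDFReal 0 1 x := by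
  rw [gaussianTail, measureReal_def, gaussianReal_apply_eq_integral _ one_ne_zero,
    ENNReal.toReal_ofReal]
  exact setIntegral_nonneg measurableSet_Ioi fun x _ => gaussianPDFReal_nonneg _ _ _

lemma tendsto_gaussianTail_atTop : Tendsto gaussianTail atTop (𝓝 0) := by
  simp_rw [funext gaussianTail_eq_one_sub_cdf]
  simpa using (tendsto_cdf_atTop (gaussianReal 0 1)).const_sub 1

lemma hasDerivAt_gaussianPDFReal (μ : ℝ) (v : NNReal) (x : ℝ) :
    HasDerivAt (gaussianPDFReal μ v) (-((x - μ) / v) * gaussianPDFReal μ v x) x := by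
  have h : HasDerivAt (fun x => -(x - μ) ^ 2 / (2 * v)) (-((x - μ) / v)) x := by
    refine ((((hasDerivAt_id x).sub_const μ).fun_pow 2).fun_neg.div_const
      (2 * (v : ℝ))).congr_deriv ?_
    rw [id, mul_one, Nat.cast_two, pow_one, neg_div, mul_div_mul_left _ _ two_ne_zero]
  rw [gaussianPDFReal_def]
  exact (h.exp.const_mul _).congr_deriv (by ring)

lemma hasDerivAt_gaussianTail (y : ℝ) :
    HasDerivAt gaussianTail (-gaussianPDFReal 0 1 y) y := by
  have hpdf := integrable_gaussianPDFReal 0 1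
  have hcont : Continuous (gaussianPDFReal 0 1) :=
    continuous_iff_continuousAt.2 fun x => (hasDerivAt_gaussianPDFReal 0 1 x).continuousAt
  have htail : gaussianTail = fun y =>
      (∫ x in Ioi 0, gaussianPDFReal 0 1 x) - ∫ x in (0 : ℝ)..y, gaussianPDFReal 0 1 x := by
    ext y
    rw [gaussianTail_eq_integral,
      ← intervalIntegral.integral_Ioi_sub_Ioi' hpdf.integrableOn hpdf.integrableOn, sub_sub_cancel]
  rw [htail]
  exact (hcont.integral_hasStrictDerivAt 0 y).hasDerivAt.const_sub _

lemma continuous_gaussianTail : Continuous gaussianTail :=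
  continuous_iff_continuousAt.2 fun y => (hasDerivAt_gaussianTail y).continuousAt

lemma gaussianPDFReal_zero_one_div (y z : ℝ) :
    gaussianPDFReal 0 1 y / gaussianPDFReal 0 1 z = Real.exp ((z ^ 2 - y ^ 2) / 2) := by
  have hc : (√(2 * Real.pi * (1 : NNReal)))⁻¹ ≠ 0 := by
    rw [NNReal.coe_one]
    positivity
  simp only [gaussianPDFReal_def]
  rw [mul_div_mul_left _ _ hc, ← Real.exp_sub, NNReal.coe_one]
  ring_nf

lemma tendsto_gaussianPDFReal_zero_one_atTop :
    Tendsto (gaussianPDFReal 0 1) atTop (𝓝 0) := by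
  have hexp : Tendsto (fun y : ℝ => Real.exp (-(y ^ 2 / 2))) atTop (𝓝 0) :=
    Real.tendsto_exp_neg_atTop_nhds_zero.comp
      ((tendsto_pow_atTop two_ne_zero).atTop_div_const two_pos)
  have hlim := hexp.mul_const (gaussianPDFReal 0 1 0)
  rw [zero_mul] at hlim
  refine hlim.congr fun y => ?_
  rw [(div_eq_iff (gaussianPDFReal_pos 0 1 0 one_ne_zero).ne').1 (gaussianPDFReal_zero_one_div y 0)]
  ring_nf

/-- Mills' asymptotics of the Gaussian tail. -/
lemma isEquivalent_gaussianTail :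
    Asymptotics.IsEquivalent atTop gaussianTail fun y => gaussianPDFReal 0 1 y / y := by
  have hpos : ∀ y, 0 < gaussianPDFReal 0 1 y := fun y => gaussianPDFReal_pos _ _ _ one_ne_zero
  refine Asymptotics.isEquivalent_of_tendsto_one ?_
  refine HasDerivAt.lhopital_zero_atTop (f' := fun y => -gaussianPDFReal 0 1 y)
    (g' := fun y => -gaussianPDFReal 0 1 y * (1 + (y ^ 2)⁻¹))
    (Eventually.of_forall hasDerivAt_gaussianTail) ?_ ?_ tendsto_gaussianTail_atTop ?_ ?_
  · filter_upwards [eventually_gt_atTop 0] with y hy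
    refine ((hasDerivAt_gaussianPDFReal 0 1 y).div (hasDerivAt_id y) hy.ne').congr_deriv ?_
    rw [id, NNReal.coe_one]
    field_simp
    ring
  · filter_upwards [eventually_gt_atTop 0] with y hy
    exact mul_ne_zero (neg_ne_zero.2 (hpos y).ne') (by positivity)
  · simpa only [div_eq_mul_inv, mul_zero] using
      tendsto_gaussianPDFReal_zero_one_atTop.mul tendsto_inv_atTop_zero
  · have h : Tendsto (fun y : ℝ => (1 + (y ^ 2)⁻¹)⁻¹) atTop (𝓝 1) := by
      have := (tendsto_inv_atTop_zero.comp (tendsto_pow_atTop (α := ℝ) two_ne_zero)).const_add 1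
      simpa using this.inv₀ (by simp)
    refine h.congr fun y => ?_
    rw [div_mul_cancel_left₀ (neg_ne_zero.2 (hpos y).ne')]

lemma gaussianTail_pos (y : ℝ) : 0 < gaussianTail y := by
  rw [gaussianTail_eq_integral, setIntegral_pos_iff_support_of_nonneg_ae
    (ae_of_all _ (gaussianPDFReal_nonneg 0 1)) (integrable_gaussianPDFReal 0 1).integrableOn,
    eq_univ_of_forall (s := Function.support _)
      fun x => (gaussianPDFReal_pos 0 1 x one_ne_zero).ne', univ_inter, Real.volume_Ioi]
  exact ENNReal.zero_lt_top

lemma tendsto_gaussianTail_div {ι : Type*} {l : Filter ι} {y z : ι → ℝ} {ρ κ : ℝ}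
    (hy : Tendsto y l atTop) (hz : Tendsto z l atTop)
    (hρ : Tendsto (fun i => z i / y i) l (𝓝 ρ))
    (hκ : Tendsto (fun i => Real.exp ((z i ^ 2 - y i ^ 2) / 2)) l (𝓝 κ)) :
    Tendsto (fun i => gaussianTail (y i) / gaussianTail (z i)) l (𝓝 (κ * ρ)) := by
  have hequiv := (isEquivalent_gaussianTail.comp_tendsto hy).div
    (isEquivalent_gaussianTail.comp_tendsto hz)
  refine hequiv.symm.tendsto_nhds ((hκ.mul hρ).congr fun i => ?_)
  rw [← gaussianPDFReal_zero_one_div, div_mul_div_comm, Pi.div_apply, Function.comp_apply,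
    Function.comp_apply, div_div_div_eq, mul_comm (y i)]

lemma tendsto_const_div_nhdsGT_zero_atTop {a : ℝ} (ha : 0 < a) :
    Tendsto (fun ε => a / ε) (𝓝[>] 0) atTop :=
  tendsto_inv_nhdsGT_zero.const_mul_atTop ha

lemma tendsto_gaussianTail_const_div_ratio_zero {a b : ℝ} (hb : 0 < b) (hab : b < a) :
    Tendsto (fun ε => gaussianTail (a / ε) / gaussianTail (b / ε)) (𝓝[>] 0) (𝓝 0) := by
  suffices Tendsto (fun ε => gaussianTail (a / ε) / gaussianTail (b / ε)) (𝓝[>] 0)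
      (𝓝 (0 * (b / a))) by rwa [zero_mul] at this
  refine tendsto_gaussianTail_div (tendsto_const_div_nhdsGT_zero_atTop (hb.trans hab))
    (tendsto_const_div_nhdsGT_zero_atTop hb) ?_ ?_
  · refine tendsto_const_nhds.congr' ?_
    filter_upwards [self_mem_nhdsWithin] with ε (hε : 0 < ε)
    rw [div_div_div_cancel_right₀ hε.ne']
  · have hgap : 0 < (a ^ 2 - b ^ 2) / 2 := by nlinarith
    refine (Real.tendsto_exp_neg_atTop_nhds_zero.comp (((tendsto_pow_atTop two_ne_zero).comp
      tendsto_inv_nhdsGT_zero).const_mul_atTop hgap)).congr fun ε => ?_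
    simp only [Function.comp_apply]
    ring_nf

lemma tendsto_gaussianTail_perturbed_ratio {a : ℝ} (ha : 0 < a) (κ : ℝ) :
    Tendsto (fun ε => gaussianTail (a / ε / √(1 - ε ^ 2 * κ)) / gaussianTail (a / ε)) (𝓝[>] 0)
      (𝓝 (Real.exp (-(a ^ 2 * κ / 2)))) := by
  have hv : Tendsto (fun ε => 1 - ε ^ 2 * κ) (𝓝[>] 0) (𝓝 1) := by
    have : Continuous fun ε => 1 - ε ^ 2 * κ := by fun_prop
    simpa using (this.tendsto 0).mono_left nhdsWithin_le_nhds
  have hsqrt : Tendsto (fun ε => √(1 - ε ^ 2 * κ)) (𝓝[>] 0) (𝓝 1) := by simpa using hv.sqrt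
  have hz := tendsto_const_div_nhdsGT_zero_atTop ha
  have hvpos : ∀ᶠ ε in 𝓝[>] 0, 0 < 1 - ε ^ 2 * κ := hv.eventually (lt_mem_nhds one_pos)
  rw [← mul_one (Real.exp _)]
  refine tendsto_gaussianTail_div ?_ hz ?_ ?_
  · simpa only [div_eq_mul_inv, inv_one] using
      hz.atTop_mul_pos (inv_pos.2 one_pos) (hsqrt.inv₀ one_ne_zero)
  · refine hsqrt.congr' ?_
    filter_upwards [hz.eventually_gt_atTop 0] with ε hε
    rw [div_div_cancel₀ hε.ne']
  · have hlim : Tendsto (fun ε => Real.exp (-(a ^ 2 * κ / 2) / (1 - ε ^ 2 * κ))) (𝓝[>] 0)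
        (𝓝 (Real.exp (-(a ^ 2 * κ / 2)))) := by
      simpa using (tendsto_const_nhds (x := -(a ^ 2 * κ / 2)).div hv one_ne_zero).rexp
    refine hlim.congr' ?_
    filter_upwards [self_mem_nhdsWithin, hvpos] with ε (hε : 0 < ε) h
    rw [div_pow _ √_, Real.sq_sqrt h.le]
    congr 1
    rw [div_eq_iff h.ne', div_mul_eq_mul_div, sub_mul, div_mul_cancel₀ _ h.ne']
    field_simp
    ring

lemma gaussianReal_real_Ioi {v : ℝ} (hv : 0 < v) (y : ℝ) :
    (gaussianReal 0 v.toNNReal).real (Ioi y) = gaussianTail (y / √v) := by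
  have hs : 0 < √v := Real.sqrt_pos.2 hv
  have hscale : (gaussianReal 0 1).map (√v * ·) = gaussianReal 0 v.toNNReal := by
    rw [gaussianReal_map_const_mul, mul_zero, mul_one]
    congr 1
    ext
    simp only [NNReal.coe_mk, Real.sq_sqrt hv.le, Real.coe_toNNReal v hv.le]
  rw [← hscale, map_measureReal_apply (by fun_prop) measurableSet_Ioi, gaussianTail]
  congr 1
  ext x
  rw [mem_preimage, mem_Ioi, mem_Ioi, div_lt_iff₀' hs]

lemma gaussianReal_zero_real_Iio_zero (v : NNReal) :
    (gaussianReal 0 v).real (Iio 0) = (gaussianReal 0 v).real (Ioi 0) := by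
  conv_rhs => rw [← neg_zero, ← gaussianReal_map_neg, map_measureReal_apply (by fun_prop)
    measurableSet_Ioi]
  congr 1
  ext x
  simp

lemma half_le_gaussianReal_zero_real_Ici (v : NNReal) :
    1 / 2 ≤ (gaussianReal 0 v).real (Ici 0) := by
  have hle : (gaussianReal 0 v).real (Iio 0) ≤ (gaussianReal 0 v).real (Ici 0) :=
    (gaussianReal_zero_real_Iio_zero v).trans_le (measureReal_mono Ioi_subset_Ici_self)
  rw [← compl_Ici, probReal_compl_eq_one_sub measurableSet_Ici] at hle
  linarith

lemma gaussianReal_zero_real_Ioi_le_half (v : NNReal) :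
    (gaussianReal 0 v).real (Ioi 0) ≤ 1 / 2 := by
  have hle := half_le_gaussianReal_zero_real_Ici v
  rw [← compl_Iio, probReal_compl_eq_one_sub measurableSet_Iio, gaussianReal_zero_real_Iio_zero]
    at hle
  linarith

end GaussianTail

section DisjointEvents

variable {Ω ι : Type*} [MeasurableSpace Ω] {P : Measure Ω} [IsFiniteMeasure P] {s : Finset ι}
  {A F : ι → Set Ω} {c : ℝ}

lemma measureReal_biUnion_inter_of_indepSet (hd : Pairwise (Function.onFun Disjoint A))
    (hA : ∀ k, MeasurableSet (A k)) (hF : ∀ k, MeasurableSet (F k))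
    (hind : ∀ k ∈ s, IndepSet (A k) (F k) P) :
    P.real (⋃ k ∈ s, A k ∩ F k) = ∑ k ∈ s, P.real (A k) * P.real (F k) := by
  rw [measureReal_biUnion_finset
    (fun i _ j _ hij => (hd hij).mono inter_subset_left inter_subset_left)
    fun k _ => (hA k).inter (hF k)]
  refine Finset.sum_congr rfl fun k hk => ?_
  rw [measureReal_def, (hind k hk).measure_inter_eq_mul, ENNReal.toReal_mul]
  rfl

lemma mul_measureReal_biUnion_le (hd : Pairwise (Function.onFun Disjoint A))
    (hA : ∀ k, MeasurableSet (A k)) (hF : ∀ k, MeasurableSet (F k))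
    (hind : ∀ k ∈ s, IndepSet (A k) (F k) P) (hc : ∀ k ∈ s, c ≤ P.real (F k)) :
    c * P.real (⋃ k ∈ s, A k) ≤ P.real (⋃ k ∈ s, A k ∩ F k) := by
  rw [measureReal_biUnion_inter_of_indepSet hd hA hF hind,
    measureReal_biUnion_finset (fun i _ j _ hij => hd hij) fun k _ => hA k, mul_comm,
    Finset.sum_mul]
  exact Finset.sum_le_sum fun k hk => mul_le_mul_of_nonneg_left (hc k hk) measureReal_nonneg

lemma measureReal_biUnion_inter_le (hd : Pairwise (Function.onFun Disjoint A))
    (hA : ∀ k, MeasurableSet (A k)) (hF : ∀ k, MeasurableSet (F k))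
    (hind : ∀ k ∈ s, IndepSet (A k) (F k) P) (hc : ∀ k ∈ s, P.real (F k) ≤ c) :
    P.real (⋃ k ∈ s, A k ∩ F k) ≤ c * P.real (⋃ k ∈ s, A k) := by
  rw [measureReal_biUnion_inter_of_indepSet hd hA hF hind,
    measureReal_biUnion_finset (fun i _ j _ hij => hd hij) fun k _ => hA k, mul_comm,
    Finset.sum_mul]
  exact Finset.sum_le_sum fun k hk => mul_le_mul_of_nonneg_left (hc k hk) measureReal_nonneg

end DisjointEvents

section RandomWalk

lemma biUnion_Iic_disjointed_eq_setOf {α : Type*} (W : ℕ → Set α) (n : ℕ) :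
    ⋃ k ∈ Finset.Iic n, disjointed W k = {ω | ∃ k ≤ n, ω ∈ W k} := by
  rw [biUnion_Iic_disjointed, partialSups_eq_biSup]
  ext ω
  simp only [iSup_eq_iUnion, mem_iUnion, exists_prop, mem_ofPred_eq]

lemma exists_le_mem_disjointed {α : Type*} {W : ℕ → Set α} {ω : α} {n : ℕ} (h : ω ∈ W n) :
    ∃ k ≤ n, ω ∈ disjointed W k := by
  have := (biUnion_Iic_disjointed_eq_setOf W n).ge ⟨n, le_rfl, h⟩
  simpa only [Finset.mem_Iic, mem_iUnion, exists_prop] using this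

variable {Ω : Type*} {mΩ : MeasurableSpace Ω} {P : Measure Ω} {𝓕 : Filtration ℕ mΩ}
  {S : ℕ → Ω → ℝ} {W : ℕ → Set Ω} {V : ℕ → Set ℝ} {n : ℕ} {c : ℝ}

lemma measurableSet_disjointed_of_adapted (hW : ∀ k, MeasurableSet[𝓕 k] (W k)) (k : ℕ) :
    MeasurableSet[𝓕 k] (disjointed W k) := by
  rw [disjointed_eq_inter_compl]
  exact (hW k).inter
    (.biInter (to_countable _) fun i (hi : i < k) => (𝓕.mono hi.le _ (hW i)).compl)

lemma comap_sub_le_iSup_comap_increment (S : ℕ → Ω → ℝ) {j k : ℕ} (hjk : j ≤ k) :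
    MeasurableSpace.comap (S k - S j) inferInstance ≤
      ⨆ i ∈ Ico j k, MeasurableSpace.comap (S (i + 1) - S i) inferInstance := by
  have hsum : S k - S j = fun ω => ∑ i ∈ Finset.Ico j k, (S (i + 1) - S i) ω := by
    rw [← Finset.sum_Ico_sub S hjk, Finset.sum_fn]
  rw [hsum, ← measurable_iff_comap_le]
  exact Finset.measurable_sum _ fun i hi =>
    measurable_iff_comap_le.2
      (le_iSup₂ (f := fun i (_ : i ∈ Ico j k) => MeasurableSpace.comap (S (i + 1) - S i) _)
        i (Finset.mem_Ico.1 hi))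

lemma indep_natural_increment (hS : ∀ k, StronglyMeasurable (S k)) (h0 : S 0 = 0)
    (hind : iIndepFun (fun i => S (i + 1) - S i) P) {k : ℕ} (hkn : k ≤ n) :
    Indep (Filtration.natural S hS k) (MeasurableSpace.comap (S n - S k) inferInstance) P := by
  have hsplit := indep_iSup_of_disjoint
    (fun i => ((hS (i + 1)).measurable.sub (hS i).measurable).comap_le) hind
    (S := Iio k) (T := Ici k) (Iio_disjoint_Ici le_rfl)
  refine indep_of_indep_of_le_right (indep_of_indep_of_le_left hsplit ?_)
    ((comap_sub_le_iSup_comap_increment S hkn).trans (biSup_mono fun i hi => hi.1))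
  refine iSup₂_le fun j hjk => ?_
  have hj := comap_sub_le_iSup_comap_increment S j.zero_le
  rw [h0, sub_zero] at hj
  exact hj.trans (biSup_mono fun i hi => hi.2.trans_le hjk)

variable [IsProbabilityMeasure P]

lemma indepSet_disjointed_increment (hW : ∀ k, MeasurableSet[𝓕 k] (W k))
    (hS : ∀ k, Measurable (S k)) {k : ℕ}
    (hind : Indep (𝓕 k) (MeasurableSpace.comap (S n - S k) inferInstance) P)
    {V : Set ℝ} (hV : MeasurableSet V) :
    IndepSet (disjointed W k) ((S n - S k) ⁻¹' V) P :=
  (indepSet_iff_measure_inter_eq_mul (𝓕.le k _ (measurableSet_disjointed_of_adapted hW k))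
    (((hS n).sub (hS k)) hV) P).2
    ((Indep_iff _ _ P).1 hind _ _ (measurableSet_disjointed_of_adapted hW k) ⟨V, hV, rfl⟩)

lemma setOf_exists_disjointed_increment_eq :
    {ω | ∃ k ≤ n, ω ∈ disjointed W k ∧ S n ω - S k ω ∈ V k} =
      ⋃ k ∈ Finset.Iic n, disjointed W k ∩ (S n - S k) ⁻¹' V k := by
  ext ω
  simp only [mem_ofPred_eq, mem_iUnion, Finset.mem_Iic, exists_prop, mem_inter_iff, mem_preimage,
    Pi.sub_apply]

lemma mul_measureReal_exists_le (hS : ∀ k, Measurable (S k))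
    (hind : ∀ k ≤ n, Indep (𝓕 k) (MeasurableSpace.comap (S n - S k) inferInstance) P)
    (hW : ∀ k, MeasurableSet[𝓕 k] (W k)) (hV : ∀ k, MeasurableSet (V k))
    (hc : ∀ k ≤ n, c ≤ P.real {ω | S n ω - S k ω ∈ V k}) :
    c * P.real {ω | ∃ k ≤ n, ω ∈ W k} ≤
      P.real {ω | ∃ k ≤ n, ω ∈ disjointed W k ∧ S n ω - S k ω ∈ V k} := by
  rw [setOf_exists_disjointed_increment_eq, ← biUnion_Iic_disjointed_eq_setOf]
  exact mul_measureReal_biUnion_le (disjoint_disjointed W)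
    (fun k => 𝓕.le k _ (measurableSet_disjointed_of_adapted hW k))
    (fun k => ((hS n).sub (hS k)) (hV k))
    (fun k hk => indepSet_disjointed_increment hW hS (hind k (Finset.mem_Iic.1 hk)) (hV k))
    fun k hk => hc k (Finset.mem_Iic.1 hk)

lemma measureReal_exists_disjointed_le (hS : ∀ k, Measurable (S k))
    (hind : ∀ k ≤ n, Indep (𝓕 k) (MeasurableSpace.comap (S n - S k) inferInstance) P)
    (hW : ∀ k, MeasurableSet[𝓕 k] (W k)) (hV : ∀ k, MeasurableSet (V k))
    (hc : ∀ k ≤ n, P.real {ω | S n ω - S k ω ∈ V k} ≤ c) :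
    P.real {ω | ∃ k ≤ n, ω ∈ disjointed W k ∧ S n ω - S k ω ∈ V k} ≤
      c * P.real {ω | ∃ k ≤ n, ω ∈ W k} := by
  rw [setOf_exists_disjointed_increment_eq, ← biUnion_Iic_disjointed_eq_setOf]
  exact measureReal_biUnion_inter_le (disjoint_disjointed W)
    (fun k => 𝓕.le k _ (measurableSet_disjointed_of_adapted hW k))
    (fun k => ((hS n).sub (hS k)) (hV k))
    (fun k hk => indepSet_disjointed_increment hW hS (hind k (Finset.mem_Iic.1 hk)) (hV k))
    fun k hk => hc k (Finset.mem_Iic.1 hk)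

/-- Ottaviani's inequality. -/
lemma measureReal_exists_le_two_mul (hS : ∀ k, Measurable (S k))
    (hind : ∀ k ≤ n, Indep (𝓕 k) (MeasurableSpace.comap (S n - S k) inferInstance) P)
    (hW : ∀ k, MeasurableSet[𝓕 k] (W k))
    (hhalf : ∀ k ≤ n, 1 / 2 ≤ P.real {ω | S n ω - S k ω ∈ Ici 0}) :
    P.real {ω | ∃ k ≤ n, ω ∈ W k} ≤ 2 * P.real {ω | ∃ k ≤ n, ω ∈ W k ∧ S k ω ≤ S n ω} := by
  have hfirst := mul_measureReal_exists_le hS hind hW (fun _ => measurableSet_Ici) hhalf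
  have hmono : P.real {ω | ∃ k ≤ n, ω ∈ disjointed W k ∧ S n ω - S k ω ∈ Ici 0} ≤
      P.real {ω | ∃ k ≤ n, ω ∈ W k ∧ S k ω ≤ S n ω} :=
    measureReal_mono fun ω ⟨k, hk, hω, h⟩ => ⟨k, hk, disjointed_subset W k hω, sub_nonneg.1 h⟩
  linarith

lemma measureReal_exists_lt_then_gt_le (hS : ∀ k, Measurable[𝓕 k] (S k))
    (hind : ∀ k ≤ n, Indep (𝓕 k) (MeasurableSpace.comap (S n - S k) inferInstance) P)
    (hhalf : ∀ k ≤ n, 1 / 2 ≤ P.real {ω | S n ω - S k ω ∈ Ici 0})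
    (low : ℕ → ℝ) {up : ℕ → ℝ} (hup : Monotone up)
    (hc : ∀ k ≤ n, P.real {ω | S n ω - S k ω ∈ Ioi (up k - low k)} ≤ c) :
    P.real {ω | ∃ k ≤ n, (∃ j ≤ k, S j ω < low j) ∧ up k < S k ω} ≤ 2 * c := by
  set W : ℕ → Set Ω := fun j => {ω | S j ω < low j}
  have hS' : ∀ k, Measurable (S k) := fun k => (hS k).mono (𝓕.le k) le_rfl
  have hW : ∀ j, MeasurableSet[𝓕 j] (W j) := fun j => hS j measurableSet_Iio
  have hU : ∀ k, MeasurableSet[𝓕 k] {ω | (∃ j ≤ k, S j ω < low j) ∧ up k < S k ω} := by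
    intro k
    have hinter : {ω | (∃ j ≤ k, S j ω < low j) ∧ up k < S k ω} =
        (⋃ j ∈ Iic k, W j) ∩ {ω | up k < S k ω} := by
      ext ω
      simp only [W, mem_ofPred_eq, mem_inter_iff, mem_iUnion, mem_Iic, exists_prop]
    rw [hinter]
    exact (MeasurableSet.biUnion (to_countable _) fun j hj => 𝓕.mono hj _ (hW j)).inter
      (hS k measurableSet_Ioi)
  have hc0 : 0 ≤ c := measureReal_nonneg.trans (hc 0 n.zero_le)
  calc P.real {ω | ∃ k ≤ n, (∃ j ≤ k, S j ω < low j) ∧ up k < S k ω}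
    _ ≤ 2 * P.real {ω | ∃ k ≤ n, ((∃ j ≤ k, S j ω < low j) ∧ up k < S k ω) ∧ S k ω ≤ S n ω} :=
        measureReal_exists_le_two_mul hS' hind hU hhalf
    _ ≤ 2 * P.real {ω | ∃ j ≤ n, ω ∈ disjointed W j ∧ S n ω - S j ω ∈ Ioi (up j - low j)} := by
        refine mul_le_mul_of_nonneg_left (measureReal_mono ?_) zero_le_two
        rintro ω ⟨k, hkn, ⟨⟨j, hjk, hj⟩, hk⟩, hn⟩
        obtain ⟨i, hij, hi⟩ := exists_le_mem_disjointed (W := W) hj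
        have hSi : S i ω < low i := disjointed_subset W i hi
        have hupi : up i ≤ up k := hup (hij.trans hjk)
        exact ⟨i, hij.trans (hjk.trans hkn), hi, by rw [mem_Ioi]; linarith⟩
    _ ≤ 2 * (c * P.real {ω | ∃ j ≤ n, ω ∈ W j}) := mul_le_mul_of_nonneg_left
        (measureReal_exists_disjointed_le hS' hind hW (fun _ => measurableSet_Ioi) hc) zero_le_two
    _ ≤ 2 * c := by
        have := mul_le_of_le_one_right hc0
          (measureReal_le_one (μ := P) (s := {ω | ∃ j ≤ n, ω ∈ W j}))
        linarith

-- Unless a single step exceeds `δ`, the walk first enters `(x, ∞)` at a point `≤ x + δ`, and from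
-- there it has to increase once more to end above `x + δ`.
lemma measureReal_add_lt_le (hS : ∀ k, Measurable[𝓕 k] (S k))
    (hind : ∀ k ≤ n, Indep (𝓕 k) (MeasurableSpace.comap (S n - S k) inferInstance) P)
    (hhalf : ∀ k ≤ n, P.real {ω | S n ω - S k ω ∈ Ioi 0} ≤ 1 / 2) {x δ : ℝ} (hδ : 0 ≤ δ)
    (h0 : ∀ ω, S 0 ω ≤ x) :
    P.real {ω | x + δ < S n ω} ≤ 1 / 2 * P.real {ω | ∃ k ≤ n, x < S k ω} +
      P.real {ω | ∃ k < n, δ < S (k + 1) ω - S k ω} := by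
  set W : ℕ → Set Ω := fun k => {ω | x < S k ω}
  have hW : ∀ k, MeasurableSet[𝓕 k] (W k) := fun k => hS k measurableSet_Ioi
  have hfirst := measureReal_exists_disjointed_le (fun k => (hS k).mono (𝓕.le k) le_rfl) hind hW
    (fun _ => measurableSet_Ioi) hhalf
  refine le_trans ((measureReal_mono ?_).trans (measureReal_union_le
    {ω | ∃ k ≤ n, ω ∈ disjointed W k ∧ S n ω - S k ω ∈ Ioi 0} _)) (add_le_add_left hfirst _)
  intro ω (hω : x + δ < S n ω)
  obtain ⟨k, hkn, hk⟩ := exists_le_mem_disjointed (W := W) (show x < S n ω by linarith)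
  by_cases hover : S k ω ≤ x + δ
  · exact Or.inl ⟨k, hkn, hk, sub_pos.2 (hover.trans_lt hω)⟩
  · obtain _ | j := k
    · linarith [h0 ω]
    · rw [disjointed_eq_inter_compl] at hk
      have hj : ¬ x < S j ω := mem_iInter₂.1 hk.2 j j.lt_succ_self
      exact Or.inr ⟨j, hkn, by linarith⟩

end RandomWalk

section Grid

/-- The `k`-th point of the partition of `[0, T]` into `n` intervals of equal length. -/
noncomputable def gridTime (T : ℝ) (n k : ℕ) : ℝ := k * (T / n)

variable {T r : ℝ} {n : ℕ}

lemma gridTime_zero_right (T : ℝ) (n : ℕ) : gridTime T n 0 = 0 := by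
  rw [gridTime, Nat.cast_zero, zero_mul]

lemma gridTime_self (T : ℝ) (hn : n ≠ 0) : gridTime T n n = T :=
  mul_div_cancel₀ T (Nat.cast_ne_zero.2 hn)

lemma gridTime_monotone (hT : 0 ≤ T) (n : ℕ) : Monotone (gridTime T n) := fun _ _ h =>
  mul_le_mul_of_nonneg_right (Nat.cast_le.2 h) (div_nonneg hT n.cast_nonneg)

lemma gridTime_mem_Icc (hT : 0 ≤ T) (hn : n ≠ 0) {k : ℕ} (hk : k ≤ n) :
    gridTime T n k ∈ Icc 0 T :=
  ⟨(gridTime_zero_right T n).ge.trans (gridTime_monotone hT n k.zero_le),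
    (gridTime_monotone hT n hk).trans_eq (gridTime_self T hn)⟩

lemma gridTime_succ_sub (T : ℝ) (n k : ℕ) : gridTime T n (k + 1) - gridTime T n k = T / n := by
  rw [gridTime, gridTime, ← sub_mul, Nat.cast_add_one, add_sub_cancel_left, one_mul]

lemma tendsto_gridTime_floor (hT : 0 < T) (hr : 0 ≤ r) :
    Tendsto (fun n : ℕ => gridTime T n ⌊r / T * n⌋₊) atTop (𝓝 r) := by
  have h := ((tendsto_nat_floor_mul_div_atTop (div_nonneg hr hT.le)).comp
    tendsto_natCast_atTop_atTop).mul_const T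
  rw [div_mul_cancel₀ _ hT.ne'] at h
  exact h.congr fun n => (mul_comm_div _ _ _)

lemma floor_div_mul_natCast_le (hT : 0 < T) (hr : r ≤ T) (n : ℕ) : ⌊r / T * n⌋₊ ≤ n :=
  Nat.floor_le_of_le (mul_le_of_le_one_left n.cast_nonneg ((div_le_one hT).2 hr))

lemma eventually_forall_dist_gridTime_lt (hT : 0 ≤ T) {f : ℝ → ℝ} (hf : ContinuousOn f (Icc 0 T))
    {δ : ℝ} (hδ : 0 < δ) :
    ∀ᶠ n : ℕ in atTop, ∀ k < n, dist (f (gridTime T n (k + 1))) (f (gridTime T n k)) < δ := by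
  obtain ⟨η, hη, huc⟩ := Metric.uniformContinuousOn_iff.1
    (isCompact_Icc.uniformContinuousOn_of_continuous hf) δ hδ
  filter_upwards [(tendsto_const_div_atTop_nhds_zero_nat T).eventually (gt_mem_nhds hη)]
    with n hn k hk
  refine huc _ (gridTime_mem_Icc hT (by omega) hk) _ (gridTime_mem_Icc hT (by omega) hk.le) ?_
  rwa [Real.dist_eq, gridTime_succ_sub, abs_of_nonneg (by positivity)]

end Grid

section BrownianMotion

lemma measureReal_le_of_eventually_mem {Ω : Type*} [MeasurableSpace Ω] {P : Measure Ω}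
    [IsFiniteMeasure P] {D : Set Ω} {E : ℕ → Set Ω} {c : ℝ}
    (hE : ∀ᶠ n in atTop, P.real (E n) ≤ c) (hD : ∀ ω ∈ D, ∀ᶠ n in atTop, ω ∈ E n) :
    P.real D ≤ c := by
  set F : ℕ → Set Ω := fun N => ⋂ n ≥ N, E n
  have hmono : Monotone F := fun M N h =>
    biInter_subset_biInter_left fun n (hn : N ≤ n) => h.trans hn
  have hlim := (ENNReal.tendsto_toReal (measure_ne_top P _)).comp
    (tendsto_measure_iUnion_atTop (μ := P) hmono)
  have hDF : D ⊆ ⋃ N, F N := fun ω hω => by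
    obtain ⟨N, hN⟩ := eventually_atTop.1 (hD ω hω)
    exact mem_iUnion.2 ⟨N, mem_iInter₂.2 hN⟩
  refine (measureReal_mono hDF).trans (le_of_tendsto hlim ?_)
  filter_upwards [hE] with n hn
  exact (measureReal_mono (biInter_subset_of_mem (le_refl n))).trans hn

/-- A Brownian motion all of whose paths, and not only almost all, start at `0` and are continuous,
also at negative times; every Brownian motion agrees almost surely with one on `[0, ∞)`. -/
structure IsRegularBrownianMotion {Ω : Type*} [MeasurableSpace Ω] (P : Measure Ω)
    (B : ℝ → Ω → ℝ) : Prop where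
  isBrownianMotion : IsBrownianMotion P B
  zero : ∀ ω, B 0 ω = 0
  continuous : ∀ ω, Continuous fun t => B t ω

namespace IsRegularBrownianMotion

variable {Ω : Type*} [MeasurableSpace Ω] {P : Measure Ω} {B : ℝ → Ω → ℝ} {T x : ℝ}

lemma measurable (hB : IsRegularBrownianMotion P B) (t : ℝ) : Measurable (B t) :=
  hB.isBrownianMotion.1 t

lemma measureReal_increment_mem (hB : IsRegularBrownianMotion P B) {s t : ℝ} (hs : 0 ≤ s)
    (hst : s ≤ t) {V : Set ℝ} (hV : MeasurableSet V) :
    P.real {ω | B t ω - B s ω ∈ V} = (gaussianReal 0 (Real.toNNReal (t - s))).real V := by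
  have hmeas : Measurable fun ω => B t ω - B s ω := (hB.measurable t).sub (hB.measurable s)
  rw [← hB.isBrownianMotion.2.2.1 s t hs hst, map_measureReal_apply hmeas hV]
  rfl

lemma measureReal_lt (hB : IsRegularBrownianMotion P B) (hT : 0 < T) (x : ℝ) :
    P.real {ω | x < B T ω} = gaussianTail (x / √T) := by
  have := hB.measureReal_increment_mem le_rfl hT.le (measurableSet_Ioi (a := x))
  simpa only [hB.zero, sub_zero, mem_Ioi, gaussianReal_real_Ioi hT] using this

lemma indep_grid (hB : IsRegularBrownianMotion P B) (hT : 0 ≤ T) {n k : ℕ} (hk : k ≤ n) :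
    Indep
      (Filtration.natural (fun k => B (gridTime T n k))
        (fun _ => (hB.measurable _).stronglyMeasurable) k)
      (MeasurableSpace.comap (B (gridTime T n n) - B (gridTime T n k)) inferInstance) P :=
  indep_natural_increment (S := fun k => B (gridTime T n k)) _
    (funext fun ω => (gridTime_zero_right T n).symm ▸ hB.zero ω)
    (hB.isBrownianMotion.2.2.2 _ (gridTime_monotone hT n) fun k =>
      (gridTime_zero_right T n).ge.trans (gridTime_monotone hT n k.zero_le)) hk

lemma measurable_natural_grid (hB : IsRegularBrownianMotion P B) (T : ℝ) (n k : ℕ) :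
    Measurable[Filtration.natural (fun k => B (gridTime T n k))
      (fun _ => (hB.measurable _).stronglyMeasurable) k] (B (gridTime T n k)) :=
  (Filtration.stronglyAdapted_natural (u := fun k => B (gridTime T n k)) _ k).measurable

lemma half_le_measureReal_increment_mem_Ici (hB : IsRegularBrownianMotion P B) {s t : ℝ}
    (hs : 0 ≤ s) (hst : s ≤ t) : 1 / 2 ≤ P.real {ω | B t ω - B s ω ∈ Ici 0} := by
  rw [hB.measureReal_increment_mem hs hst measurableSet_Ici]
  exact half_le_gaussianReal_zero_real_Ici _

lemma measureReal_increment_mem_Ioi_le_half (hB : IsRegularBrownianMotion P B) {s t : ℝ}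
    (hs : 0 ≤ s) (hst : s ≤ t) : P.real {ω | B t ω - B s ω ∈ Ioi 0} ≤ 1 / 2 := by
  rw [hB.measureReal_increment_mem hs hst measurableSet_Ioi]
  exact gaussianReal_zero_real_Ioi_le_half _

lemma measureReal_increment_gt_mul_sqrt_le (hB : IsRegularBrownianMotion P B) (c : ℝ) {r : ℝ}
    (hr : r ∈ Icc 0 T) :
    P.real {ω | B T ω - B r ω ∈ Ioi (c * √(T - r))} ≤ gaussianTail c := by
  obtain rfl | hrT := hr.2.eq_or_lt
  · simpa only [sub_self, Real.sqrt_zero, mul_zero, mem_Ioi, lt_irrefl, ofPred_false,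
      measureReal_empty] using gaussianTail_nonneg c
  · have hpos : 0 < T - r := sub_pos.2 hrT
    rw [hB.measureReal_increment_mem hr.1 hrT.le measurableSet_Ioi, gaussianReal_real_Ioi hpos,
      mul_div_cancel_right₀ _ (Real.sqrt_pos.2 hpos).ne']

variable [IsProbabilityMeasure P]

lemma measureReal_exists_lt_le (hB : IsRegularBrownianMotion P B) (hT : 0 < T) (x : ℝ) :
    P.real {ω | ∃ r ∈ Icc 0 T, x < B r ω} ≤ 2 * gaussianTail (x / √T) := by
  refine measureReal_le_of_eventually_mem
    (E := fun n => {ω | ∃ k ≤ n, ω ∈ {ω | x < B (gridTime T n k) ω}}) ?_ ?_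
  · filter_upwards [eventually_ne_atTop 0] with n hn
    have hgrid : ∀ k ≤ n, gridTime T n k ∈ Icc 0 T := fun k => gridTime_mem_Icc hT.le hn
    have hmax := measureReal_exists_le_two_mul (S := fun k => B (gridTime T n k))
      (fun k => hB.measurable _) (fun k => hB.indep_grid hT.le)
      (W := fun k => {ω | x < B (gridTime T n k) ω})
      (fun k => hB.measurable_natural_grid T n k measurableSet_Ioi) fun k hk =>
        hB.half_le_measureReal_increment_mem_Ici (hgrid k hk).1 (gridTime_monotone hT.le n hk)
    rw [← hB.measureReal_lt hT]
    refine hmax.trans (mul_le_mul_of_nonneg_left (measureReal_mono ?_) zero_le_two)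
    rintro ω ⟨k, -, hk, hkn⟩
    rw [gridTime_self T hn] at hkn
    exact lt_of_lt_of_le hk hkn
  · rintro ω ⟨r, hr, hx⟩
    have hlim := ((hB.continuous ω).tendsto r).comp (tendsto_gridTime_floor hT hr.1)
    filter_upwards [hlim.eventually (lt_mem_nhds hx)] with n hn
    exact ⟨_, floor_div_mul_natCast_le hT hr.2 n, hn⟩

lemma tendsto_measureReal_exists_increment_gt (hB : IsRegularBrownianMotion P B) (hT : 0 ≤ T)
    {δ : ℝ} (hδ : 0 < δ) :
    Tendsto (fun n : ℕ => P.real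
      {ω | ∃ k < n, δ < B (gridTime T n (k + 1)) ω - B (gridTime T n k) ω}) atTop (𝓝 0) := by
  have hmeas : ∀ n, MeasurableSet
      {ω | ∃ k < n, δ < B (gridTime T n (k + 1)) ω - B (gridTime T n k) ω} := fun n => by
    simp only [ofPred_exists, ofPred_and]
    exact .iUnion fun k => (MeasurableSet.const _).inter
      (measurableSet_lt measurable_const ((hB.measurable _).sub (hB.measurable _)))
  have hlim := tendsto_measure_of_tendsto_indicator_of_isFiniteMeasure (A := ∅) atTop P hmeas
    fun ω => ?_
  · rw [measure_empty] at hlim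
    exact (ENNReal.tendsto_toReal ENNReal.zero_ne_top).comp hlim
  · filter_upwards [eventually_forall_dist_gridTime_lt hT (hB.continuous ω).continuousOn hδ]
      with n hn
    refine iff_of_false ?_ (notMem_empty ω)
    rintro ⟨k, hk, hlt⟩
    exact (le_abs_self _).not_gt ((Real.dist_eq _ _ ▸ hn k hk).trans hlt)

lemma two_mul_gaussianTail_le (hB : IsRegularBrownianMotion P B) (hT : 0 < T) (hx : 0 ≤ x)
    {δ : ℝ} (hδ : 0 < δ) :
    2 * gaussianTail ((x + δ) / √T) ≤ P.real {ω | ∃ r ∈ Icc 0 T, x < B r ω} := by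
  have hlim := ((hB.tendsto_measureReal_exists_increment_gt hT.le hδ).const_mul 2).const_add
    (P.real {ω | ∃ r ∈ Icc 0 T, x < B r ω})
  rw [mul_zero, add_zero] at hlim
  refine ge_of_tendsto hlim ?_
  filter_upwards [eventually_ne_atTop 0] with n hn
  have hgrid : ∀ k ≤ n, gridTime T n k ∈ Icc 0 T := fun k => gridTime_mem_Icc hT.le hn
  have hstep := measureReal_add_lt_le (S := fun k => B (gridTime T n k))
    (hB.measurable_natural_grid T n) (fun k => hB.indep_grid hT.le) (fun k hk =>
      hB.measureReal_increment_mem_Ioi_le_half (hgrid k hk).1 (gridTime_monotone hT.le n hk))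
    hδ.le (x := x) fun ω => by simpa only [gridTime_zero_right, hB.zero] using hx
  rw [gridTime_self T hn, hB.measureReal_lt hT] at hstep
  have hsub : P.real {ω | ∃ k ≤ n, x < B (gridTime T n k) ω} ≤
      P.real {ω | ∃ r ∈ Icc 0 T, x < B r ω} :=
    measureReal_mono fun ω ⟨k, hk, hlt⟩ => ⟨_, hgrid k hk, hlt⟩
  linarith

/-- The **reflection principle**. -/
lemma measureReal_exists_le (hB : IsRegularBrownianMotion P B) (hT : 0 < T) (hx : 0 ≤ x) :
    P.real {ω | ∃ r ∈ Icc 0 T, x ≤ B r ω} = 2 * gaussianTail (x / √T) := by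
  have hcont : Continuous fun y => 2 * gaussianTail (y / √T) :=
    continuous_const.mul (continuous_gaussianTail.comp (continuous_id.div_const _))
  refine le_antisymm
    (ge_of_tendsto ((hcont.tendsto x).mono_left (nhdsWithin_le_nhds (s := Iio x))) ?_)
    (le_of_tendsto ((hcont.tendsto x).mono_left (nhdsWithin_le_nhds (s := Ioi x))) ?_)
  · filter_upwards [self_mem_nhdsWithin] with y hy
    refine le_trans (measureReal_mono ?_) (hB.measureReal_exists_lt_le hT y)
    exact fun ω ⟨r, hr, h⟩ => ⟨r, hr, lt_of_lt_of_le hy h⟩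
  · filter_upwards [self_mem_nhdsWithin] with y hy
    have hle := hB.two_mul_gaussianTail_le hT hx (sub_pos.2 hy)
    rw [add_sub_cancel] at hle
    exact hle.trans (measureReal_mono fun ω ⟨r, hr, h⟩ => ⟨r, hr, h.le⟩)

lemma measureReal_exists_lt_then_gt_le (hB : IsRegularBrownianMotion P B) (hT : 0 < T)
    {low up : ℝ → ℝ} (hlow : Continuous low) (hup : Continuous up) (hupm : Monotone up) {c : ℝ}
    (hc : ∀ r ∈ Icc 0 T, P.real {ω | B T ω - B r ω ∈ Ioi (up r - low r)} ≤ c) :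
    P.real {ω | ∃ r' ∈ Icc 0 T, (∃ r ∈ Icc 0 r', B r ω < low r) ∧ up r' < B r' ω} ≤ 2 * c := by
  refine measureReal_le_of_eventually_mem (E := fun n => {ω | ∃ k ≤ n,
    (∃ j ≤ k, B (gridTime T n j) ω < low (gridTime T n j)) ∧
      up (gridTime T n k) < B (gridTime T n k) ω}) ?_ ?_
  · filter_upwards [eventually_ne_atTop 0] with n hn
    have hgrid : ∀ k ≤ n, gridTime T n k ∈ Icc 0 T := fun k => gridTime_mem_Icc hT.le hn
    refine _root_.measureReal_exists_lt_then_gt_le (S := fun k => B (gridTime T n k))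
      (hB.measurable_natural_grid T n) (fun k => hB.indep_grid hT.le) (fun k hk =>
        hB.half_le_measureReal_increment_mem_Ici (hgrid k hk).1 (gridTime_monotone hT.le n hk))
      (fun j => low (gridTime T n j)) (hupm.comp (gridTime_monotone hT.le n)) fun k hk => ?_
    rw [gridTime_self T hn]
    exact hc _ (hgrid k hk)
  · rintro ω ⟨r', hr', ⟨r, hr, hlt⟩, hlt'⟩
    have hB' := hB.continuous ω
    filter_upwards [(tendsto_gridTime_floor hT hr.1).eventually
        (hB'.continuousAt.eventually_lt hlow.continuousAt hlt),
      (tendsto_gridTime_floor hT hr'.1).eventually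
        (hup.continuousAt.eventually_lt hB'.continuousAt hlt')] with n hn hn'
    have hfloor : ⌊r / T * n⌋₊ ≤ ⌊r' / T * n⌋₊ := by
      gcongr
      exact hr.2
    exact ⟨_, floor_div_mul_natCast_le hT hr'.2 n, ⟨_, hfloor, hn⟩, hn'⟩

-- To come back from the curve to level `x` the increment over the remaining time `T - r` would have
-- to exceed `a` standard deviations, up to the reflection factor `2`.
lemma measureReal_exists_le_curve_then_ge_le (hB : IsRegularBrownianMotion P B) (hT : 0 < T)
    (x a : ℝ) :
    P.real {ω | ∃ r' ∈ Ico 0 T, (∃ r ∈ Icc 0 r', B r ω ≤ x - a * √(T - r)) ∧ x ≤ B r' ω} ≤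
      2 * gaussianTail a := by
  have hcont : Continuous fun c => 2 * gaussianTail c :=
    continuous_const.mul continuous_gaussianTail
  refine ge_of_tendsto ((hcont.tendsto a).mono_left (nhdsWithin_le_nhds (s := Iio a))) ?_
  filter_upwards [self_mem_nhdsWithin] with c (hca : c < a)
  obtain ⟨b, hcb, hba⟩ := exists_between hca
  have hupm : Monotone fun r => x - (b - c) * √(T - r) := fun r r' h =>
    sub_le_sub_left (mul_le_mul_of_nonneg_left (Real.sqrt_le_sqrt (sub_le_sub_left h T))
      (sub_pos.2 hcb).le) x
  refine le_trans (measureReal_mono ?_) (hB.measureReal_exists_lt_then_gt_le hT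
    (c := gaussianTail c) (low := fun r => x - b * √(T - r)) (by fun_prop) (by fun_prop) hupm
    fun r hr => ?_)
  · rintro ω ⟨r', hr', ⟨r, hr, hlow⟩, hup⟩
    have hs : 0 < √(T - r) := Real.sqrt_pos.2 (sub_pos.2 (hr.2.trans_lt hr'.2))
    have hs' : 0 < √(T - r') := Real.sqrt_pos.2 (sub_pos.2 hr'.2)
    refine ⟨r', Ico_subset_Icc_self hr', ⟨r, hr, hlow.trans_lt ?_⟩, lt_of_lt_of_le ?_ hup⟩
    · exact sub_lt_sub_left (mul_lt_mul_of_pos_right hba hs) x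
    · exact sub_lt_self x (mul_pos (sub_pos.2 hcb) hs')
  · have hdiff : x - (b - c) * √(T - r) - (x - b * √(T - r)) = c * √(T - r) := by ring
    rw [hdiff]
    exact hB.measureReal_increment_gt_mul_sqrt_le c hr

end IsRegularBrownianMotion

end BrownianMotion

section WeakConvergence

lemma measureReal_Ioc_eq_sub_Iic {μ : Measure ℝ} [IsFiniteMeasure μ] {a b : ℝ} (hab : a ≤ b) :
    μ.real (Ioc a b) = μ.real (Iic b) - μ.real (Iic a) := by
  rw [← Iic_sdiff_Iic, measureReal_sdiff (Iic_subset_Iic.2 hab) measurableSet_Iic]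

variable {ι : Type*} {l : Filter ι} [l.IsCountablyGenerated]

lemma tendsto_probabilityMeasure_of_tendsto_Iic {μ : ι → ProbabilityMeasure ℝ}
    {ν : ProbabilityMeasure ℝ}
    (h : ∀ c, Tendsto (fun i => (μ i : Measure ℝ).real (Iic c)) l
      (𝓝 ((ν : Measure ℝ).real (Iic c)))) :
    Tendsto μ l (𝓝 ν) := by
  refine IsPiSystem.tendsto_probabilityMeasure_of_tendsto_of_mem
    (S := {s | ∃ a b : ℝ, a ≤ b ∧ s = Ioc a b}) ?_ ?_ ?_ ?_
  · rintro _ ⟨a, b, -, rfl⟩ _ ⟨a', b', -, rfl⟩ hne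
    rw [Ioc_inter_Ioc] at hne ⊢
    exact ⟨_, _, (nonempty_Ioc.1 hne).le, rfl⟩
  · rintro _ ⟨a, b, -, rfl⟩
    exact measurableSet_Ioc
  · intro u hu x hx
    obtain ⟨δ, hδ, hsub⟩ := Metric.isOpen_iff.1 hu x hx
    refine ⟨Ioc (x - δ / 2) (x + δ / 2), ⟨_, _, by linarith, rfl⟩,
      Ioc_mem_nhds (by linarith) (by linarith), fun y hy => hsub ?_⟩
    rw [Metric.mem_ball, Real.dist_eq, abs_lt]
    constructor <;> linarith [hy.1, hy.2]
  · rintro _ ⟨a, b, hab, rfl⟩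
    rw [← NNReal.tendsto_coe]
    refine (((h b).sub (h a)).congr fun i => (measureReal_Ioc_eq_sub_Iic hab).symm).trans_eq ?_
    rw [← measureReal_Ioc_eq_sub_Iic hab]
    rfl

lemma tendsto_integral_of_tendsto_Iic {μ : ι → Measure ℝ} {ν : Measure ℝ} [IsProbabilityMeasure ν]
    (hμ : ∀ᶠ i in l, IsProbabilityMeasure (μ i))
    (h : ∀ c, Tendsto (fun i => (μ i).real (Iic c)) l (𝓝 (ν.real (Iic c))))
    (f : BoundedContinuousFunction ℝ ℝ) :
    Tendsto (fun i => ∫ x, f x ∂(μ i)) l (𝓝 (∫ x, f x ∂ν)) := by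
  classical
  let μ' : ι → ProbabilityMeasure ℝ := fun i =>
    if hi : IsProbabilityMeasure (μ i) then ⟨μ i, hi⟩ else ⟨ν, inferInstance⟩
  have hμ' : ∀ᶠ i in l, (μ' i : Measure ℝ) = μ i := by
    filter_upwards [hμ] with i hi
    exact congrArg _ (dif_pos hi)
  have hlim : Tendsto μ' l (𝓝 ⟨ν, inferInstance⟩) := by
    refine tendsto_probabilityMeasure_of_tendsto_Iic fun c => (h c).congr' ?_
    filter_upwards [hμ'] with i hi
    rw [hi]
  refine ((ProbabilityMeasure.tendsto_iff_forall_integral_tendsto.1 hlim) f).congr' ?_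
  filter_upwards [hμ'] with i hi
  rw [hi]

end WeakConvergence

section HittingTime

variable {Ω E : Type*}

/-- The times `t ≥ 0` at which the path `y` is in `F`. -/
def hitSet (F : Set E) (y : ℝ → E) : Set ℝ := {t | 0 ≤ t ∧ y t ∈ F}

/-- The first time at which the path `y` is in `F`; it is `0` when `y` never meets `F`. -/
noncomputable def hitTime (F : Set E) (y : ℝ → E) : ℝ := sInf (hitSet F y)

/-- The path `y` meets `F`, and does so for the first time at the point `a`. -/
def HitsFirstAt (F : Set E) (a : E) (y : ℝ → E) : Prop :=
  (hitSet F y).Nonempty ∧ y (hitTime F y) = a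

variable {F : Set E} {a : E} {y y' : ℝ → E} {t : ℝ}

lemma bddBelow_hitSet : BddBelow (hitSet F y) := ⟨0, fun _ h => h.1⟩

lemma hitTime_nonneg : 0 ≤ hitTime F y := Real.sInf_nonneg fun _ h => h.1

lemma hitSet_congr (h : EqOn y y' (Ici 0)) : hitSet F y = hitSet F y' :=
  ext fun t => and_congr_right fun ht => by rw [h ht]

lemma hitTime_congr (h : EqOn y y' (Ici 0)) : hitTime F y = hitTime F y' := by
  rw [hitTime, hitTime, hitSet_congr h]

lemma hitsFirstAt_congr (h : EqOn y y' (Ici 0)) : HitsFirstAt F a y ↔ HitsFirstAt F a y' := by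
  rw [HitsFirstAt, HitsFirstAt, hitSet_congr h, hitTime_congr h, h hitTime_nonneg]

lemma hitTime_mem_hitSet [TopologicalSpace E] (hy : Continuous y) (hF : IsClosed F)
    (hne : (hitSet F y).Nonempty) : hitTime F y ∈ hitSet F y :=
  (isClosed_Ici.inter (hF.preimage hy)).csInf_mem hne bddBelow_hitSet

lemma lt_hitTime_iff [TopologicalSpace E] (hy : Continuous y) (hF : IsClosed F) (ht : 0 ≤ t) :
    t < hitTime F y ↔ (hitSet F y).Nonempty ∧ ∀ r ∈ Icc 0 t, y r ∉ F := by
  constructor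
  · refine fun hlt => ⟨?_, fun r hr hmem =>
      (hr.2.trans_lt hlt).not_ge (csInf_le bddBelow_hitSet ⟨hr.1, hmem⟩)⟩
    by_contra hempty
    rw [hitTime, not_nonempty_iff_eq_empty.1 hempty, Real.sInf_empty] at hlt
    exact hlt.not_ge ht
  · rintro ⟨hne, hnotMem⟩
    obtain ⟨h0, hmem⟩ := hitTime_mem_hitSet hy hF hne
    exact lt_of_not_ge fun hle => hnotMem _ ⟨h0, hle⟩ hmem

variable [PseudoEMetricSpace E]

lemma forall_Icc_notMem_iff (hy : Continuous y) (hF : IsClosed F) (ht : 0 ≤ t) :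
    (∀ r ∈ Icc 0 t, y r ∉ F) ↔
      ∃ m : ℕ, ∀ q : ℚ, (m : ENNReal)⁻¹ ≤ Metric.infEDist (y (projIcc 0 t ht q)) F := by
  have hdist : Continuous fun r => Metric.infEDist (y r) F := Metric.continuous_infEDist.comp hy
  constructor
  · intro hne
    obtain ⟨r, hr, hmin⟩ := isCompact_Icc.exists_isMinOn (nonempty_Icc.2 ht) hdist.continuousOn
    have hpos : Metric.infEDist (y r) F ≠ 0 := fun h0 =>
      hne r hr ((Metric.mem_iff_infEDist_zero_of_closed hF).2 h0)
    obtain ⟨m, hm⟩ := ENNReal.exists_inv_nat_lt hpos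
    exact ⟨m, fun q => hm.le.trans (hmin (projIcc 0 t ht q).2)⟩
  · rintro ⟨m, hm⟩ r hr hmem
    have hclosed : IsClosed {q : ℝ | (m : ENNReal)⁻¹ ≤ Metric.infEDist (y (projIcc 0 t ht q)) F} :=
      isClosed_le continuous_const
        (hdist.comp (continuous_subtype_val.comp continuous_projIcc))
    have hr' := Rat.denseRange_cast.induction_on (p := fun q : ℝ =>
      (m : ENNReal)⁻¹ ≤ Metric.infEDist (y (projIcc 0 t ht q)) F) r hclosed hm
    rw [projIcc_of_mem ht hr, (Metric.mem_iff_infEDist_zero_of_closed hF).1 hmem] at hr'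
    exact ENNReal.inv_ne_zero.2 (ENNReal.natCast_ne_top m) (nonpos_iff_eq_zero.1 hr')

variable [MeasurableSpace Ω] [MeasurableSpace E] {Y : ℝ → Ω → E}

lemma measurableSet_forall_Icc_notMem [OpensMeasurableSpace E] (hc : ∀ ω, Continuous (Y · ω))
    (hm : ∀ t, Measurable (Y t)) (hF : IsClosed F) (ht : 0 ≤ t) :
    MeasurableSet {ω | ∀ r ∈ Icc 0 t, Y r ω ∉ F} := by
  simp only [forall_Icc_notMem_iff (hc _) hF ht, ofPred_exists, ofPred_forall]
  exact .iUnion fun m => .iInter fun q =>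
    measurableSet_le measurable_const (measurable_infEDist.comp (hm _))

lemma measurableSet_hitSet_nonempty [OpensMeasurableSpace E] (hc : ∀ ω, Continuous (Y · ω))
    (hm : ∀ t, Measurable (Y t)) (hF : IsClosed F) :
    MeasurableSet {ω | (hitSet F (Y · ω)).Nonempty} := by
  have hunion : {ω | (hitSet F (Y · ω)).Nonempty} =
      ⋃ n : ℕ, {ω | ∀ r ∈ Icc 0 (n : ℝ), Y r ω ∉ F}ᶜ := by
    ext ω
    simp only [mem_ofPred_eq, mem_iUnion, mem_compl_iff, not_forall, not_not]
    constructor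
    · rintro ⟨t, ht, hmem⟩
      obtain ⟨n, hn⟩ := exists_nat_ge t
      exact ⟨n, t, ⟨ht, hn⟩, hmem⟩
    · rintro ⟨n, t, ht, hmem⟩
      exact ⟨t, ht.1, hmem⟩
  rw [hunion]
  exact .iUnion fun n => (measurableSet_forall_Icc_notMem hc hm hF n.cast_nonneg).compl

lemma measurable_hitTime [OpensMeasurableSpace E] (hc : ∀ ω, Continuous (Y · ω))
    (hm : ∀ t, Measurable (Y t)) (hF : IsClosed F) :
    Measurable fun ω => hitTime F (Y · ω) := by
  refine measurable_of_Ioi fun t => ?_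
  rcases lt_or_ge t 0 with ht | ht
  · convert! MeasurableSet.univ (α := Ω)
    exact eq_univ_of_forall fun ω => ht.trans_le hitTime_nonneg
  · have hpre : (fun ω => hitTime F (Y · ω)) ⁻¹' Ioi t =
        {ω | (hitSet F (Y · ω)).Nonempty} ∩ {ω | ∀ r ∈ Icc 0 t, Y r ω ∉ F} :=
      ext fun ω => lt_hitTime_iff (hc ω) hF ht
    rw [hpre]
    exact (measurableSet_hitSet_nonempty hc hm hF).inter
      (measurableSet_forall_Icc_notMem hc hm hF ht)

lemma measurableSet_hitsFirstAt [BorelSpace E] [MeasurableSingletonClass E]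
    (hc : ∀ ω, Continuous (Y · ω)) (hm : ∀ t, Measurable (Y t)) (hF : IsClosed F) (a : E) :
    MeasurableSet {ω | HitsFirstAt F a (Y · ω)} := by
  have hend : Measurable fun ω => Y (hitTime F (Y · ω)) ω :=
    (measurable_uncurry_of_continuous_of_measurable hc hm).comp
      ((measurable_hitTime hc hm hF).prodMk measurable_id)
  exact (measurableSet_hitSet_nonempty hc hm hF).inter (hend (measurableSet_singleton a))

end HittingTime

section UnstablePath

/-- The variance of `∫₀ᵗ e^{-λs} dW(s)`, at which the Brownian motion driving `X_ε(t)` is read. -/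
noncomputable def varianceClock (lam t : ℝ) : ℝ := (1 - Real.exp (-(2 * lam * t))) / (2 * lam)

/-- The solution of `dX = λ X dt + ε dW`, `X(0) = x₀`, as a function of the Brownian path `b` run
along the variance clock. -/
noncomputable def unstablePath (lam x₀ ε : ℝ) (b : ℝ → ℝ) (t : ℝ) : ℝ :=
  Real.exp (lam * t) * (x₀ + ε * b (varianceClock lam t))

/-- The exit time `τ_ε` of the unstable path from the interval `(qm, 0)`, with value `0` on paths
that never exit. -/
noncomputable def exitTime (lam qm x₀ ε : ℝ) (b : ℝ → ℝ) : ℝ :=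
  hitTime {qm, 0} (unstablePath lam x₀ ε b)

/-- The event `C_ε`, as a condition on the Brownian path `b`: the unstable path leaves `(qm, 0)`
through `0`. -/
def ExitsAtZero (lam qm x₀ ε : ℝ) (b : ℝ → ℝ) : Prop :=
  HitsFirstAt {qm, 0} 0 (unstablePath lam x₀ ε b)

variable {lam qm x₀ ε t : ℝ} {b : ℝ → ℝ}

lemma continuous_varianceClock (lam : ℝ) : Continuous (varianceClock lam) := by
  unfold varianceClock
  fun_prop

lemma varianceClock_zero (lam : ℝ) : varianceClock lam 0 = 0 := by
  rw [varianceClock, mul_zero, neg_zero, Real.exp_zero, sub_self, zero_div]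

lemma varianceClock_strictMono (hlam : 0 < lam) : StrictMono (varianceClock lam) := by
  intro s t hst
  unfold varianceClock
  gcongr

lemma varianceClock_pos (hlam : 0 < lam) (ht : 0 < t) : 0 < varianceClock lam t :=
  (varianceClock_zero lam).symm.trans_lt (varianceClock_strictMono hlam ht)

lemma varianceClock_nonneg (hlam : 0 < lam) (ht : 0 ≤ t) : 0 ≤ varianceClock lam t :=
  (varianceClock_zero lam).symm.trans_le ((varianceClock_strictMono hlam).monotone ht)

lemma varianceClock_lt (hlam : 0 < lam) (t : ℝ) : varianceClock lam t < 1 / (2 * lam) := by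
  unfold varianceClock
  gcongr
  linarith [Real.exp_pos (-(2 * lam * t))]

lemma tendsto_varianceClock_atTop (hlam : 0 < lam) :
    Tendsto (varianceClock lam) atTop (𝓝 (1 / (2 * lam))) := by
  have hexp : Tendsto (fun t => Real.exp (-(2 * lam * t))) atTop (𝓝 0) :=
    Real.tendsto_exp_neg_atTop_nhds_zero.comp
      (tendsto_id.const_mul_atTop (mul_pos two_pos hlam))
  rw [← sub_zero 1]
  exact (hexp.const_sub 1).div_const (2 * lam)

lemma varianceClock_log_add (hlam : lam ≠ 0) (hε : 0 < ε) (c : ℝ) :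
    varianceClock lam (1 / lam * Real.log (1 / ε) + c) =
      (1 - ε ^ 2 * Real.exp (-(2 * lam * c))) / (2 * lam) := by
  have hexponent : -(2 * lam * (1 / lam * Real.log (1 / ε) + c)) =
      Real.log (ε ^ 2) + -(2 * lam * c) := by
    rw [one_div ε, Real.log_inv, Real.log_pow]
    field_simp
    push_cast
    ring
  rw [varianceClock, hexponent, Real.exp_add, Real.exp_log (pow_pos hε 2)]

lemma sqrt_sub_varianceClock (lam t : ℝ) :
    √(1 / (2 * lam) - varianceClock lam t) = Real.exp (-(lam * t)) / √(2 * lam) := by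
  have hsq : 1 / (2 * lam) - varianceClock lam t = Real.exp (-(lam * t)) ^ 2 / (2 * lam) := by
    rw [varianceClock, ← sub_div, sub_sub_cancel, ← Real.exp_nat_mul]
    ring_nf
  rw [hsq, Real.sqrt_div (sq_nonneg _), Real.sqrt_sq (Real.exp_pos _).le]

lemma continuous_unstablePath (hb : Continuous b) : Continuous (unstablePath lam x₀ ε b) := by
  have hclock := continuous_varianceClock lam
  unfold unstablePath
  fun_prop

lemma unstablePath_zero (hb0 : b 0 = 0) : unstablePath lam x₀ ε b 0 = x₀ := by
  rw [unstablePath, varianceClock_zero, hb0, mul_zero, mul_zero, add_zero, Real.exp_zero, one_mul]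

lemma unstablePath_eqOn {b' : ℝ → ℝ} (hlam : 0 < lam) (h : EqOn b b' (Ici 0)) :
    EqOn (unstablePath lam x₀ ε b) (unstablePath lam x₀ ε b') (Ici 0) := fun t ht => by
  rw [unstablePath, unstablePath, h (varianceClock_nonneg hlam ht)]

lemma unstablePath_nonneg_iff (hε : 0 < ε) (t : ℝ) :
    0 ≤ unstablePath lam x₀ ε b t ↔ -x₀ / ε ≤ b (varianceClock lam t) := by
  rw [unstablePath, mul_nonneg_iff_of_pos_left (Real.exp_pos _), div_le_iff₀ hε,
    neg_le_iff_add_nonneg', mul_comm ε]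

lemma apply_varianceClock_of_unstablePath_eq (hlam : 0 < lam) (hε : ε ≠ 0)
    (h : unstablePath lam x₀ ε b t = qm) :
    b (varianceClock lam t) =
      -x₀ / ε - -qm * √(2 * lam) / ε * √(1 / (2 * lam) - varianceClock lam t) := by
  have hsqrt : √(2 * lam) ≠ 0 := (Real.sqrt_pos.2 (mul_pos two_pos hlam)).ne'
  rw [sqrt_sub_varianceClock, ← h, unstablePath, Real.exp_neg]
  field_simp [hsqrt]
  ring

lemma ExitsAtZero.exists_le_apply (hlam : 0 < lam) (hε : 0 < ε)
    (h : ExitsAtZero lam qm x₀ ε b) (ht : exitTime lam qm x₀ ε b ≤ t) :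
    ∃ r ∈ Icc 0 (varianceClock lam t), -x₀ / ε ≤ b r :=
  ⟨_, ⟨varianceClock_nonneg hlam hitTime_nonneg, (varianceClock_strictMono hlam).monotone ht⟩,
    (unstablePath_nonneg_iff hε _).1 h.2.ge⟩

lemma exitsAtZero_or_below_curve (hlam : 0 < lam) (hε : 0 < ε) (hx₀ : x₀ ≤ 0) (hb : Continuous b)
    (hb0 : b 0 = 0) (ht : 0 ≤ t) {r : ℝ} (hr : r ∈ Icc 0 (varianceClock lam t))
    (hbr : -x₀ / ε ≤ b r) :
    (ExitsAtZero lam qm x₀ ε b ∧ exitTime lam qm x₀ ε b ≤ t) ∨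
      ∃ r' ∈ Ico 0 (1 / (2 * lam)), (∃ r ∈ Icc 0 r',
        b r ≤ -x₀ / ε - -qm * √(2 * lam) / ε * √(1 / (2 * lam) - r)) ∧ -x₀ / ε ≤ b r' := by
  rw [← varianceClock_zero lam] at hr
  obtain ⟨s, hs, rfl⟩ := intermediate_value_Icc ht (continuous_varianceClock lam).continuousOn hr
  have hcont : Continuous (unstablePath lam x₀ ε b) := continuous_unstablePath hb
  obtain ⟨s', hs', hzero⟩ := intermediate_value_Icc hs.1 hcont.continuousOn
    ⟨by rwa [unstablePath_zero hb0], (unstablePath_nonneg_iff hε s).2 hbr⟩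
  have hmem : s' ∈ hitSet {qm, 0} (unstablePath lam x₀ ε b) := ⟨hs'.1, Or.inr hzero⟩
  have hle : exitTime lam qm x₀ ε b ≤ s' := csInf_le bddBelow_hitSet hmem
  rcases (hitTime_mem_hitSet hcont (toFinite _).isClosed ⟨s', hmem⟩).2 with hqm | h0
  · exact .inr ⟨_, ⟨varianceClock_nonneg hlam hs.1, varianceClock_lt hlam s⟩,
      ⟨_, ⟨varianceClock_nonneg hlam hitTime_nonneg,
        (varianceClock_strictMono hlam).monotone (hle.trans hs'.2)⟩,
        (apply_varianceClock_of_unstablePath_eq hlam hε.ne' hqm).le⟩, hbr⟩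
  · exact .inl ⟨⟨⟨s', hmem⟩, h0⟩, hle.trans (hs'.2.trans hs.2)⟩

end UnstablePath

section ExitProbability

variable {Ω : Type*} [MeasurableSpace Ω] {P : Measure Ω} {B : ℝ → Ω → ℝ} {lam qm x₀ ε t : ℝ}

lemma measurable_unstablePath (hB : ∀ t, Measurable (B t)) (t : ℝ) :
    Measurable fun ω => unstablePath lam x₀ ε (B · ω) t :=
  (((hB (varianceClock lam t)).const_mul ε).const_add x₀).const_mul (Real.exp (lam * t))

lemma measurable_exitTime (hc : ∀ ω, Continuous (B · ω)) (hm : ∀ t, Measurable (B t)) :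
    Measurable fun ω => exitTime lam qm x₀ ε (B · ω) :=
  measurable_hitTime (Y := fun t ω => unstablePath lam x₀ ε (B · ω) t)
    (fun ω => continuous_unstablePath (hc ω)) (measurable_unstablePath hm) (toFinite _).isClosed

lemma measurableSet_exitsAtZero (hc : ∀ ω, Continuous (B · ω)) (hm : ∀ t, Measurable (B t)) :
    MeasurableSet {ω | ExitsAtZero lam qm x₀ ε (B · ω)} :=
  measurableSet_hitsFirstAt (Y := fun t ω => unstablePath lam x₀ ε (B · ω) t)
    (fun ω => continuous_unstablePath (hc ω)) (measurable_unstablePath hm) (toFinite _).isClosed 0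

variable [IsProbabilityMeasure P]

lemma measureReal_exitsAtZero_le_time (hB : IsRegularBrownianMotion P B) (hlam : 0 < lam)
    (hε : 0 < ε) (hx₀ : x₀ ≤ 0) (ht : 0 < t) :
    P.real {ω | ExitsAtZero lam qm x₀ ε (B · ω) ∧ exitTime lam qm x₀ ε (B · ω) ≤ t} ≤
      2 * gaussianTail (-x₀ / ε / √(varianceClock lam t)) := by
  rw [← hB.measureReal_exists_le (varianceClock_pos hlam ht)
    (div_nonneg (neg_nonneg.2 hx₀) hε.le)]
  exact measureReal_mono fun ω hω => hω.1.exists_le_apply hlam hε hω.2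

lemma le_measureReal_exitsAtZero_le_time (hB : IsRegularBrownianMotion P B) (hlam : 0 < lam)
    (hε : 0 < ε) (hx₀ : x₀ ≤ 0) (ht : 0 < t) :
    2 * gaussianTail (-x₀ / ε / √(varianceClock lam t)) -
      2 * gaussianTail (-qm * √(2 * lam) / ε) ≤
    P.real {ω | ExitsAtZero lam qm x₀ ε (B · ω) ∧ exitTime lam qm x₀ ε (B · ω) ≤ t} := by
  have hcurve := hB.measureReal_exists_le_curve_then_ge_le (T := 1 / (2 * lam))
    (by positivity) (-x₀ / ε) (-qm * √(2 * lam) / ε)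
  rw [← hB.measureReal_exists_le (varianceClock_pos hlam ht)
    (div_nonneg (neg_nonneg.2 hx₀) hε.le), sub_le_iff_le_add]
  refine ((measureReal_mono ?_).trans (measureReal_union_le _ _)).trans
    (add_le_add_right hcurve _)
  rintro ω ⟨r, hr, hbr⟩
  exact exitsAtZero_or_below_curve hlam hε hx₀ (hB.continuous ω) (hB.zero ω) ht.le hr hbr

lemma div_div_sqrt_one_div (x y z : ℝ) : x / y / √(1 / z) = x * √z / y := by
  rw [one_div, Real.sqrt_inv, div_inv_eq_mul, div_mul_eq_mul_div]

lemma tendsto_gaussianTail_div_sqrt_varianceClock (hlam : 0 < lam) (x₀ ε : ℝ) :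
    Tendsto (fun t => gaussianTail (-x₀ / ε / √(varianceClock lam t))) atTop
      (𝓝 (gaussianTail (-x₀ * √(2 * lam) / ε))) := by
  rw [← div_div_sqrt_one_div]
  exact (continuous_gaussianTail.tendsto _).comp (tendsto_const_nhds.div
    (tendsto_varianceClock_atTop hlam).sqrt (Real.sqrt_pos.2 (by positivity)).ne')

lemma measureReal_exitsAtZero_le (hB : IsRegularBrownianMotion P B) (hlam : 0 < lam)
    (hε : 0 < ε) (hx₀ : x₀ ≤ 0) :
    P.real {ω | ExitsAtZero lam qm x₀ ε (B · ω)} ≤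
      2 * gaussianTail (-x₀ * √(2 * lam) / ε) := by
  rw [← div_div_sqrt_one_div, ← hB.measureReal_exists_le (by positivity)
    (div_nonneg (neg_nonneg.2 hx₀) hε.le)]
  refine measureReal_mono fun ω hω => ?_
  obtain ⟨r, hr, hbr⟩ := ExitsAtZero.exists_le_apply hlam hε hω le_rfl
  exact ⟨r, ⟨hr.1, hr.2.trans (varianceClock_lt hlam _).le⟩, hbr⟩

lemma le_measureReal_exitsAtZero (hB : IsRegularBrownianMotion P B) (hlam : 0 < lam)
    (hε : 0 < ε) (hx₀ : x₀ ≤ 0) :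
    2 * gaussianTail (-x₀ * √(2 * lam) / ε) - 2 * gaussianTail (-qm * √(2 * lam) / ε) ≤
      P.real {ω | ExitsAtZero lam qm x₀ ε (B · ω)} := by
  have hlim := (tendsto_gaussianTail_div_sqrt_varianceClock hlam x₀ ε).const_mul 2
  refine le_of_tendsto (hlim.sub_const _) ?_
  filter_upwards [eventually_gt_atTop 0] with t ht
  exact (le_measureReal_exitsAtZero_le_time hB hlam hε hx₀ ht).trans
    (measureReal_mono fun ω hω => hω.1)

end ExitProbability

section Asymptotics

variable {lam qm x₀ : ℝ}

lemma div_div_sqrt_varianceClock_log_add (hlam : 0 < lam) {ε : ℝ} (hε : 0 < ε) (c x : ℝ) :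
    x / ε / √(varianceClock lam (1 / lam * Real.log (1 / ε) + c)) =
      x * √(2 * lam) / ε / √(1 - ε ^ 2 * Real.exp (-(2 * lam * c))) := by
  rw [varianceClock_log_add hlam.ne' hε, Real.sqrt_div' _ (mul_pos two_pos hlam).le,
    div_div_eq_mul_div, div_mul_eq_mul_div]

lemma tendsto_log_one_div_add_atTop (hlam : 0 < lam) (c : ℝ) :
    Tendsto (fun ε => 1 / lam * Real.log (1 / ε) + c) (𝓝[>] 0) atTop :=
  tendsto_atTop_add_const_right _ _ ((Real.tendsto_log_atTop.comp
    (tendsto_const_div_nhdsGT_zero_atTop one_pos)).const_mul_atTop (one_div_pos.2 hlam))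

-- By the reflection principle the numerator stands for reaching `0` by time `(1/λ) ln(1/ε) + c`,
-- and the denominator for reaching `0` at all.
lemma tendsto_gaussianTail_varianceClock_ratio (hlam : 0 < lam) (hx₀ : x₀ < 0) (c : ℝ) :
    Tendsto (fun ε => gaussianTail (-x₀ / ε /
        √(varianceClock lam (1 / lam * Real.log (1 / ε) + c))) /
        gaussianTail (-x₀ * √(2 * lam) / ε)) (𝓝[>] 0)
      (𝓝 (Real.exp (-(x₀ ^ 2 * lam * Real.exp (-(2 * lam * c)))))) := by
  have h2lam : 0 < 2 * lam := mul_pos two_pos hlam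
  have hlim := tendsto_gaussianTail_perturbed_ratio
    (mul_pos (neg_pos.2 hx₀) (Real.sqrt_pos.2 h2lam)) (Real.exp (-(2 * lam * c)))
  have hrate : (-x₀ * √(2 * lam)) ^ 2 * Real.exp (-(2 * lam * c)) / 2 =
      x₀ ^ 2 * lam * Real.exp (-(2 * lam * c)) := by
    rw [mul_pow, Real.sq_sqrt h2lam.le]
    ring
  rw [hrate] at hlim
  refine hlim.congr' ?_
  filter_upwards [self_mem_nhdsWithin] with ε (hε : 0 < ε)
  rw [div_div_sqrt_varianceClock_log_add hlam hε]

-- The numerator bounds the paths that reach `0` only after having touched `q₋`.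
lemma tendsto_gaussianTail_lower_ratio (hlam : 0 < lam) (hqm : qm < x₀) (hx₀ : x₀ < 0) :
    Tendsto (fun ε => gaussianTail (-qm * √(2 * lam) / ε) /
      gaussianTail (-x₀ * √(2 * lam) / ε)) (𝓝[>] 0) (𝓝 0) := by
  have hsqrt : 0 < √(2 * lam) := Real.sqrt_pos.2 (mul_pos two_pos hlam)
  exact tendsto_gaussianTail_const_div_ratio_zero (mul_pos (neg_pos.2 hx₀) hsqrt)
    (mul_lt_mul_of_pos_right (neg_lt_neg hqm) hsqrt)

variable {Ω : Type*} [MeasurableSpace Ω] {P : Measure Ω} [IsProbabilityMeasure P] {B : ℝ → Ω → ℝ}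

lemma tendsto_measureReal_exitsAtZero_le_time_div (hB : IsRegularBrownianMotion P B)
    (hlam : 0 < lam) (hqm : qm < x₀) (hx₀ : x₀ < 0) (c : ℝ) :
    Tendsto (fun ε => P.real {ω | ExitsAtZero lam qm x₀ ε (B · ω) ∧
          exitTime lam qm x₀ ε (B · ω) ≤ 1 / lam * Real.log (1 / ε) + c} /
        (2 * gaussianTail (-x₀ * √(2 * lam) / ε))) (𝓝[>] 0)
      (𝓝 (Real.exp (-(x₀ ^ 2 * lam * Real.exp (-(2 * lam * c)))))) := by
  have htime := (tendsto_log_one_div_add_atTop hlam c).eventually_gt_atTop 0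
  have hup := tendsto_gaussianTail_varianceClock_ratio hlam hx₀ c
  have hlow := hup.sub (tendsto_gaussianTail_lower_ratio hlam hqm hx₀)
  rw [sub_zero] at hlow
  refine tendsto_of_tendsto_of_tendsto_of_le_of_le' hlow hup ?_ ?_
  · filter_upwards [self_mem_nhdsWithin, htime] with ε (hε : 0 < ε) ht
    rw [← sub_div, ← mul_div_mul_left _ _ two_ne_zero, mul_sub]
    exact div_le_div_of_nonneg_right
      (le_measureReal_exitsAtZero_le_time hB hlam hε hx₀.le ht)
      (mul_pos two_pos (gaussianTail_pos _)).le
  · filter_upwards [self_mem_nhdsWithin, htime] with ε (hε : 0 < ε) ht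
    rw [← mul_div_mul_left (gaussianTail (_ / √(varianceClock _ _))) _ two_ne_zero]
    exact div_le_div_of_nonneg_right (measureReal_exitsAtZero_le_time hB hlam hε hx₀.le ht)
      (mul_pos two_pos (gaussianTail_pos _)).le

lemma tendsto_measureReal_exitsAtZero_div (hB : IsRegularBrownianMotion P B)
    (hlam : 0 < lam) (hqm : qm < x₀) (hx₀ : x₀ < 0) :
    Tendsto (fun ε => P.real {ω | ExitsAtZero lam qm x₀ ε (B · ω)} /
        (2 * gaussianTail (-x₀ * √(2 * lam) / ε))) (𝓝[>] 0) (𝓝 1) := by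
  have hlow := (tendsto_gaussianTail_lower_ratio hlam hqm hx₀).const_sub 1
  rw [sub_zero] at hlow
  refine tendsto_of_tendsto_of_tendsto_of_le_of_le' hlow tendsto_const_nhds ?_ ?_
  · filter_upwards [self_mem_nhdsWithin] with ε (hε : 0 < ε)
    rw [one_sub_div (gaussianTail_pos _).ne', ← mul_div_mul_left _ _ two_ne_zero, mul_sub]
    exact div_le_div_of_nonneg_right
      (le_measureReal_exitsAtZero hB hlam hε hx₀.le)
      (mul_pos two_pos (gaussianTail_pos _)).le
  · filter_upwards [self_mem_nhdsWithin] with ε (hε : 0 < ε)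
    rw [div_le_one (mul_pos two_pos (gaussianTail_pos _))]
    exact measureReal_exitsAtZero_le hB hlam hε hx₀.le

lemma tendsto_cond_exitsAtZero_real_Iic (hB : IsRegularBrownianMotion P B)
    (hlam : 0 < lam) (hqm : qm < x₀) (hx₀ : x₀ < 0) (c : ℝ) :
    Tendsto (fun ε => (P[|{ω | ExitsAtZero lam qm x₀ ε (B · ω)}]).real
        {ω | exitTime lam qm x₀ ε (B · ω) - 1 / lam * Real.log (1 / ε) ≤ c}) (𝓝[>] 0)
      (𝓝 (Real.exp (-(x₀ ^ 2 * lam * Real.exp (-(2 * lam * c)))))) := by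
  have hratio := (tendsto_measureReal_exitsAtZero_le_time_div hB hlam hqm hx₀ c).div
    (tendsto_measureReal_exitsAtZero_div hB hlam hqm hx₀) one_ne_zero
  rw [div_one] at hratio
  refine hratio.congr fun ε => ?_
  rw [Pi.div_apply, div_div_div_cancel_right₀ (mul_pos two_pos (gaussianTail_pos _)).ne',
    measureReal_def (P[|_]), cond_apply (measurableSet_exitsAtZero hB.continuous hB.measurable),
    ENNReal.toReal_mul, ENNReal.toReal_inv, div_eq_inv_mul]
  simp only [sub_le_iff_le_add']
  rfl

lemma tendsto_integral_cond_exitsAtZero (hB : IsRegularBrownianMotion P B)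
    (hlam : 0 < lam) (hqm : qm < x₀) (hx₀ : x₀ < 0) {ν : Measure ℝ} [IsProbabilityMeasure ν]
    (hν : ∀ c, ν.real (Iic c) = Real.exp (-(x₀ ^ 2 * lam * Real.exp (-(2 * lam * c)))))
    (f : BoundedContinuousFunction ℝ ℝ) :
    Tendsto (fun ε => ∫ ω, f (exitTime lam qm x₀ ε (B · ω) - 1 / lam * Real.log (1 / ε))
      ∂(P[|{ω | ExitsAtZero lam qm x₀ ε (B · ω)}])) (𝓝[>] 0) (𝓝 (∫ x, f x ∂ν)) := by
  have hmeas : ∀ ε, Measurable fun ω =>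
      exitTime lam qm x₀ ε (B · ω) - 1 / lam * Real.log (1 / ε) := fun ε =>
    (measurable_exitTime hB.continuous hB.measurable).sub_const _
  have hlaw := tendsto_integral_of_tendsto_Iic (l := 𝓝[>] (0 : ℝ)) (ν := ν)
    (μ := fun ε => (P[|{ω | ExitsAtZero lam qm x₀ ε (B · ω)}]).map fun ω =>
      exitTime lam qm x₀ ε (B · ω) - 1 / lam * Real.log (1 / ε)) ?_ ?_ f
  · exact hlaw.congr fun ε =>
      integral_map (hmeas ε).aemeasurable f.continuous.aestronglyMeasurable
  · have hprob := tendsto_measureReal_exitsAtZero_div hB hlam hqm hx₀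
    filter_upwards [hprob.eventually_ne one_ne_zero] with ε hε
    have hne : P {ω | ExitsAtZero lam qm x₀ ε (B · ω)} ≠ 0 := fun h0 => hε <| by
      rw [measureReal_def, h0, ENNReal.toReal_zero, zero_div]
    have := cond_isProbabilityMeasure hne
    exact Measure.isProbabilityMeasure_map (hmeas ε).aemeasurable
  · intro c
    rw [hν]
    refine (tendsto_cond_exitsAtZero_real_Iic hB hlam hqm hx₀ c).congr fun ε => ?_
    rw [map_measureReal_apply (hmeas ε) measurableSet_Iic]
    rfl

end Asymptotics

section Modification

variable {Ω : Type*} [MeasurableSpace Ω] {P : Measure Ω} {B B' : ℝ → Ω → ℝ}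

lemma IsBrownianMotion.congr (hB : IsBrownianMotion P B) (hm : ∀ t, Measurable (B' t))
    (hae : ∀ᵐ ω ∂P, EqOn (B' · ω) (B · ω) (Ici 0)) : IsBrownianMotion P B' := by
  obtain ⟨-, hpath, hlaw, hindep⟩ := hB
  have hincr : ∀ s t, 0 ≤ s → 0 ≤ t →
      (fun ω => B' t ω - B' s ω) =ᵐ[P] fun ω => B t ω - B s ω := fun s t hs ht => by
    filter_upwards [hae] with ω hω
    exact congrArg₂ _ (hω ht) (hω hs)
  refine ⟨hm, ?_, fun s t hs hst => ?_, fun t ht ht0 => ?_⟩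
  · filter_upwards [hpath, hae] with ω hω heq
    exact ⟨(heq self_mem_Ici).trans hω.1, hω.2.congr heq⟩
  · rw [Measure.map_congr (hincr s t hs (hs.trans hst)), hlaw s t hs hst]
  · exact (iIndepFun_congr fun i => hincr _ _ (ht0 i) (ht0 (i + 1))).2 (hindep t ht ht0)

lemma IsBrownianMotion.exists_isRegularBrownianMotion (hB : IsBrownianMotion P B) :
    ∃ B' : ℝ → Ω → ℝ, IsRegularBrownianMotion P B' ∧
      ∀ᵐ ω ∂P, EqOn (B' · ω) (B · ω) (Ici 0) := by
  classical
  obtain ⟨N, hN, hNmeas, hN0⟩ := exists_measurable_superset_of_null (ae_iff.1 hB.2.1)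
  have hgood : ∀ ω ∉ N, B 0 ω = 0 ∧ ContinuousOn (fun t => B t ω) (Ici 0) := fun ω hω =>
    not_not.1 fun hbad => hω (hN hbad)
  let B' : ℝ → Ω → ℝ := fun t ω => if ω ∈ N then 0 else B (max t 0) ω
  have hbad : ∀ ω ∈ N, (B' · ω) = 0 := fun ω hω => funext fun t => if_pos hω
  have hpath : ∀ ω ∉ N, (B' · ω) = fun t => B (max t 0) ω := fun ω hω => funext fun t => if_neg hω
  have hae : ∀ᵐ ω ∂P, EqOn (B' · ω) (B · ω) (Ici 0) := by
    filter_upwards [measure_eq_zero_iff_ae_notMem.1 hN0] with ω hω t (ht : 0 ≤ t)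
    exact (congrFun (hpath ω hω) t).trans (congrArg (B · ω) (max_eq_left ht))
  have hmeas : ∀ t, Measurable (B' t) := fun t =>
    Measurable.ite hNmeas measurable_const (hB.1 _)
  refine ⟨B', ⟨hB.congr hmeas hae, fun ω => ?_, fun ω => ?_⟩, hae⟩
  · by_cases hω : ω ∈ N
    · exact congrFun (hbad ω hω) 0
    · rw [congrFun (hpath ω hω) 0, max_self, (hgood ω hω).1]
  · by_cases hω : ω ∈ N
    · exact hbad ω hω ▸ continuous_zero
    · exact hpath ω hω ▸ (hgood ω hω).2.comp_continuous (by fun_prop) fun t => le_max_right t 0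

lemma cond_congr_set {s t : Set Ω} (h : s =ᵐ[P] t) : P[|s] = P[|t] := by
  rw [ProbabilityTheory.cond, ProbabilityTheory.cond, measure_congr h, Measure.restrict_congr_set h]

lemma integral_cond_congr_ae {s t : Set Ω} {f g : Ω → ℝ} (hst : s =ᵐ[P] t) (hfg : f =ᵐ[P] g) :
    ∫ ω, f ω ∂(P[|s]) = ∫ ω, g ω ∂(P[|t]) := by
  rw [cond_congr_set hst]
  exact integral_congr_ae (cond_absolutelyContinuous.ae_le hfg)

end Modification

lemma measureReal_map_affine_gumbel {Ω : Type*} [MeasurableSpace Ω] {P : Measure Ω}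
    {Z : Ω → ℝ} (hZmeas : Measurable Z)
    (hZ : ∀ x : ℝ, (P {ω | Z ω ≤ x}).toReal = Real.exp (-Real.exp (-x)))
    {lam k : ℝ} (hlam : 0 < lam) (hk : 0 < k) (c : ℝ) :
    (P.map fun ω => 1 / (2 * lam) * Real.log k + 1 / (2 * lam) * Z ω).real (Iic c) =
      Real.exp (-(k * Real.exp (-(2 * lam * c)))) := by
  have hpre : (fun ω => 1 / (2 * lam) * Real.log k + 1 / (2 * lam) * Z ω) ⁻¹' Iic c =
      {ω | Z ω ≤ 2 * lam * c - Real.log k} := by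
    ext ω
    rw [mem_preimage, mem_Iic, mem_ofPred_eq, ← mul_add, one_div, inv_mul_le_iff₀ (by positivity),
      le_sub_iff_add_le']
  rw [map_measureReal_apply (by fun_prop) measurableSet_Iic, hpre, Measure.real, hZ, neg_sub,
    sub_eq_add_neg, Real.exp_add, Real.exp_log hk]

theorem gumbel_limit_exit_at_zero_general {Ω Ω' : Type*} [MeasurableSpace Ω] {P : Measure Ω}
    [IsProbabilityMeasure P] {B : ℝ → Ω → ℝ} (hB : IsBrownianMotion P B) {lam qm x₀ : ℝ}
    (hlam : 0 < lam) (hqm : qm < x₀) (hx₀ : x₀ < 0) [MeasurableSpace Ω'] {P' : Measure Ω'}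
    [IsProbabilityMeasure P'] {Z : Ω' → ℝ} (hZmeas : Measurable Z)
    (hZ : ∀ x : ℝ, (P' {ω' | Z ω' ≤ x}).toReal = Real.exp (-Real.exp (-x)))
    (f : BoundedContinuousFunction ℝ ℝ) :
    Tendsto (fun ε => ∫ ω, f (exitTime lam qm x₀ ε (B · ω) - 1 / lam * Real.log (1 / ε))
        ∂(P[|{ω | ExitsAtZero lam qm x₀ ε (B · ω)}])) (𝓝[>] 0)
      (𝓝 (∫ ω', f (1 / (2 * lam) * Real.log (x₀ ^ 2 * lam) + 1 / (2 * lam) * Z ω') ∂P')) := by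
  obtain ⟨B', hB', hae⟩ := hB.exists_isRegularBrownianMotion
  have hlimit_meas : Measurable fun ω' =>
      1 / (2 * lam) * Real.log (x₀ ^ 2 * lam) + 1 / (2 * lam) * Z ω' := by
    fun_prop
  have := Measure.isProbabilityMeasure_map (μ := P') hlimit_meas.aemeasurable
  have hregular := tendsto_integral_cond_exitsAtZero hB' hlam hqm hx₀
    (measureReal_map_affine_gumbel hZmeas hZ hlam (mul_pos (sq_pos_of_neg hx₀) hlam)) f
  rw [integral_map hlimit_meas.aemeasurable f.continuous.aestronglyMeasurable] at hregular
  refine hregular.congr fun ε => integral_cond_congr_ae ?_ ?_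
  · filter_upwards [hae] with ω hω
    exact propext (hitsFirstAt_congr (unstablePath_eqOn hlam hω))
  · filter_upwards [hae] with ω hω
    rw [exitTime, exitTime, hitTime_congr (unstablePath_eqOn hlam hω)]

/-- Theorem 3 (Day; Gumbel limit for exit through the characteristic boundary `0`):
for `λ > 0`, `q₋ < x₀ < 0`, the law of `τ_ε - (1/λ) ln(1/ε)` conditioned on exit at `0`
converges weakly, as `ε → 0⁺`, to the law of `(1/(2λ)) ln(x₀² λ) + (1/(2λ)) Z` with `Z`
standard Gumbel. -/
theorem gumbel_limit_exit_at_zero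
    {Ω : Type*} [MeasurableSpace Ω] (P : Measure Ω) [IsProbabilityMeasure P]
    (hPc : P.IsComplete)
    (B : ℝ → Ω → ℝ) (hB : IsBrownianMotion P B)
    (lam qm x₀ : ℝ) (hlam : 0 < lam) (hqm : qm < x₀) (hx₀ : x₀ < 0)
    (X : ℝ → ℝ → Ω → ℝ)
    (hX : ∀ ε t ω, X ε t ω
      = Real.exp (lam * t) * (x₀ + ε * B ((1 - Real.exp (-(2 * lam * t))) / (2 * lam)) ω))
    (τ : ℝ → Ω → ℝ)
    (hτ : ∀ ε ω, τ ε ω = sInf {t | 0 ≤ t ∧ (X ε t ω = qm ∨ X ε t ω = 0)})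
    (C : ℝ → Set Ω)
    (hC : ∀ ε, C ε
      = {ω | {t | 0 ≤ t ∧ (X ε t ω = qm ∨ X ε t ω = 0)}.Nonempty ∧ X ε (τ ε ω) ω = 0})
    -- `Z` is a standard Gumbel random variable on an auxiliary probability space
    {Ω' : Type*} [MeasurableSpace Ω'] (P' : Measure Ω') [IsProbabilityMeasure P']
    (Z : Ω' → ℝ) (hZmeas : Measurable Z)
    (hZ : ∀ x : ℝ, (P' {ω' | Z ω' ≤ x}).toReal = Real.exp (-Real.exp (-x))) :
    ∀ f : BoundedContinuousFunction ℝ ℝ,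
      Tendsto
        (fun ε : ℝ => ∫ ω, f (τ ε ω - (1 / lam) * Real.log (1 / ε)) ∂(P[|C ε]))
        (𝓝[>] 0)
        (𝓝 (∫ ω', f ((1 / (2 * lam)) * Real.log (x₀ ^ 2 * lam) + (1 / (2 * lam)) * Z ω') ∂P')) := by
  simp only [hC, hτ, hX]
  exact gumbel_limit_exit_at_zero_general hB hlam hqm hx₀ hZmeas hZ
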